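/- Let G be a non-cyclic finite group of odd order n. Then 2·ψ(G) < ψ(C_n). -/

import Mathlib

/-- `psi G` is the sum of the orders of all elements of the finite group `G`. -/
noncomputable def psi (G : Type*) [Group G] [Fintype G] : ℕ := ∑ x : G, orderOf x

/-- `psiC n` is the sum of the orders of all elements of the cyclic group `C_n`. -/
noncomputable def psiC (n : ℕ) : ℕ := ∑ k ∈ Finset.range n, addOrderOf (k : ZMod n)

theorem psi_prod {G H : Type*} [Group G] [Group H] [Fintype G] [Fintype H]
    (h : (Nat.card G).Coprime (Nat.card H)) : psi (G × H) = psi G * psi H := by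
  unfold psi
  rw [Finset.sum_mul_sum, Fintype.sum_prod_type]
  refine Finset.sum_congr rfl fun x _ => Finset.sum_congr rfl fun y _ => ?_
  rw [Prod.orderOf]
  exact (Nat.Coprime.of_dvd (orderOf_dvd_natCard x) (orderOf_dvd_natCard y) h).lcm_eq_mul

theorem psi_eq_psiC {G : Type*} [Group G] [Fintype G] [IsCyclic G] :
    psi G = psiC (Nat.card G) := by
  classical
  obtain ⟨g, hg⟩ := IsCyclic.exists_generator (α := G)
  have hc : orderOf g = Nat.card G := orderOf_eq_card_of_forall_mem_zpowers hg
  unfold psi psiC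
  rw [← IsCyclic.image_range_card hg, Finset.sum_image]
  · refine Finset.sum_congr rfl fun k _ => ?_
    rw [orderOf_pow, hc, ZMod.addOrderOf_coe _ Nat.card_pos.ne']
  · intro i hi j hj hij
    rw [← hc] at hi hj
    exact pow_injOn_Iio_orderOf (by simpa using hi) (by simpa using hj) hij

theorem psiC_mul {a b : ℕ} (ha : a ≠ 0) (hb : b ≠ 0) (h : a.Coprime b) :
    psiC (a * b) = psiC a * psiC b := by
  have : NeZero a := ⟨ha⟩
  have : NeZero b := ⟨hb⟩
  have hcard : (Nat.card (Multiplicative (ZMod a))).Coprime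
      (Nat.card (Multiplicative (ZMod b))) := by simpa using h
  have : IsCyclic (Multiplicative (ZMod a) × Multiplicative (ZMod b)) :=
    Group.isCyclic_prod_iff.2 ⟨inferInstance, inferInstance, hcard⟩
  have key := psi_prod hcard
  rw [psi_eq_psiC, psi_eq_psiC, psi_eq_psiC] at key
  simpa using key

theorem psiC_eq_sum_divisors {n : ℕ} (hn : n ≠ 0) :
    psiC n = ∑ d ∈ n.divisors, d * d.totient := by
  classical
  have : NeZero n := ⟨hn⟩
  have h := psi_eq_psiC (G := Multiplicative (ZMod n))
  simp only [Nat.card_eq_fintype_card, Fintype.card_multiplicative, ZMod.card] at h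
  rw [← h, psi, ← Finset.sum_fiberwise_of_maps_to (t := n.divisors) (g := orderOf)]
  · refine Finset.sum_congr rfl fun d hd => ?_
    rw [Finset.sum_congr rfl (fun x hx => (Finset.mem_filter.1 hx).2), Finset.sum_const,
      IsCyclic.card_orderOf_eq_totient, smul_eq_mul, mul_comm]
    simpa using Nat.dvd_of_mem_divisors hd
  · intro x _
    simpa [hn] using orderOf_dvd_card (x := x)

theorem add_one_mul_psiC_prime_pow {p : ℕ} (hp : p.Prime) (a : ℕ) :
    (p + 1) * psiC (p ^ a) = p * (p ^ a) ^ 2 + 1 := by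
  rw [psiC_eq_sum_divisors (pow_ne_zero _ hp.ne_zero), Nat.sum_divisors_prime_pow hp]
  induction a with
  | zero => simp
  | succ a ih =>
    rw [Finset.sum_range_succ, mul_add, ih, Nat.totient_prime_pow_succ hp]
    obtain ⟨q, rfl⟩ : ∃ q, p = q + 1 := ⟨p - 1, by have := hp.pos; omega⟩
    simp only [Nat.add_sub_cancel]
    ring

/-- If all prime factors of the odd number `n` are at most `N`, then
`ψ(C_n) ≥ 3 n² / (N + 1)`. -/
theorem three_mul_sq_le_psiC {N : ℕ} (hN : 2 ≤ N) :
    ∀ n : ℕ, Odd n → (∀ q, q.Prime → q ∣ n → q ≤ N) → 3 * n ^ 2 ≤ (N + 1) * psiC n := by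
  induction N, hN using Nat.le_induction with
  | base =>
    intro n hn h
    have : n = 1 := by
      by_contra h1
      obtain ⟨q, hq, hqn⟩ := Nat.exists_prime_and_dvd h1
      have := le_antisymm (h q hq hqn) hq.two_le
      subst this
      exact hn.not_two_dvd_nat hqn
    subst this
    simp [psiC]
  | succ N hN ih =>
    intro n hn h
    by_cases hp : (N + 1).Prime
    · obtain ⟨a, m, hm, rfl⟩ := Nat.exists_eq_pow_mul_and_not_dvd hn.pos.ne' (N + 1) hp.ne_one
      have hmo : Odd m := (Nat.odd_mul.1 hn).2
      have hi := ih m hmo fun q hq hqm => by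
        have h1 := h q hq (hqm.mul_left _)
        have h2 : q ≠ N + 1 := by rintro rfl; exact hm hqm
        omega
      rw [psiC_mul (pow_ne_zero _ hp.ne_zero) hmo.pos.ne'
        (Nat.Coprime.pow_left _ ((Nat.Prime.coprime_iff_not_dvd hp).2 hm))]
      have h1 := add_one_mul_psiC_prime_pow hp a
      have h2 : (N + 1) * ((N + 1) ^ a) ^ 2 ≤ (N + 1 + 1) * psiC ((N + 1) ^ a) := by omega
      have h3 := Nat.mul_le_mul h2 hi
      refine Nat.le_of_mul_le_mul_left (c := N + 1) ?_ (by omega)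
      calc _ = (N + 1) * ((N + 1) ^ a) ^ 2 * (3 * m ^ 2) := by ring
        _ ≤ _ := h3
        _ = _ := by ring
    · refine (ih n hn fun q hq hqn => ?_).trans (Nat.mul_le_mul_right _ (by omega))
      have h1 := h q hq hqn
      have h2 : q ≠ N + 1 := by rintro rfl; exact hp hq
      omega

theorem mul_psiC_le_psiC_mul {r m : ℕ} (hr : r ≠ 0) (hm : m ≠ 0) :
    r * psiC m ≤ psiC (r * m) := by
  have h1 : ∀ s : ℕ, ∑ k ∈ Finset.range (s * m), addOrderOf (k : ZMod m) = s * psiC m := by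
    intro s
    induction s with
    | zero => simp
    | succ s ih =>
      rw [add_mul, one_mul, Finset.sum_range_add, ih, add_mul, one_mul]
      simp [psiC]
  rw [← h1, psiC]
  refine Finset.sum_le_sum fun k _ => ?_
  have : NeZero (r * m) := ⟨mul_ne_zero hr hm⟩
  have h2 := addOrderOf_map_dvd (ZMod.castHom (dvd_mul_left m r) (ZMod m)).toAddMonoidHom
    (k : ZMod (r * m))
  exact Nat.le_of_dvd (addOrderOf_pos _) (by simpa using h2)

theorem commute_of_commute_ne_one {G : Type*} [Group G] [Finite G] {p a : ℕ} (hp : p.Prime)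
    (P : Subgroup G) [P.Normal] [IsCyclic P] (hP : Nat.card P = p ^ a) {h : G}
    (hh : (orderOf h).Coprime p) {w : G} (hw : w ∈ P) (hw1 : w ≠ 1) (hc : Commute h w)
    {u : G} (hu : u ∈ P) : Commute h u := by
  obtain ⟨g, hg⟩ := IsCyclic.exists_generator (α := P)
  have hgo : orderOf (g : G) = p ^ a := by
    rw [Subgroup.orderOf_coe, ← hP]
    exact orderOf_eq_card_of_forall_mem_zpowers hg
  have hgen : ∀ x ∈ P, ∃ k : ℤ, (g : G) ^ k = x := fun x hx => by
    obtain ⟨k, hk⟩ := hg ⟨x, hx⟩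
    exact ⟨k, by simpa using congrArg Subtype.val hk⟩
  obtain ⟨k, hk⟩ := hgen (h * g * h⁻¹) (Subgroup.Normal.conj_mem inferInstance _ g.2 h)
  obtain ⟨j, rfl⟩ := hgen w hw
  have hj : ¬ ((p : ℤ) ^ a ∣ j) := fun hd => hw1 <| by
    rw [← orderOf_dvd_iff_zpow_eq_one, hgo]
    exact_mod_cast hd
  have hpk : (p : ℤ) ∣ k - 1 := by
    by_contra hn
    have h1 : (g : G) ^ (k * j) = (g : G) ^ j := by
      rw [zpow_mul, hk, conj_zpow, hc.eq, mul_inv_cancel_right]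
    have h2 : (g : G) ^ ((k - 1) * j) = 1 := by
      rw [sub_mul, one_mul, zpow_sub, h1, mul_inv_cancel]
    rw [← orderOf_dvd_iff_zpow_eq_one, hgo] at h2
    refine hj (IsCoprime.dvd_of_dvd_mul_left ?_ (by exact_mod_cast h2))
    exact IsCoprime.pow_left (((Nat.prime_iff_prime_int.1 hp).coprime_iff_not_dvd).2 hn)
  have hconj : ∀ N : ℕ, h ^ N * g * (h ^ N)⁻¹ = (g : G) ^ (k ^ N) := by
    intro N
    induction N with
    | zero => simp
    | succ N ih =>
      rw [pow_succ' k, zpow_mul, hk, conj_zpow, ← ih]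
      group
  have hfix : Commute (h ^ p ^ a) (g : G) := by
    have h3 : (p : ℤ) ^ (a + 1) ∣ k ^ p ^ a - 1 ^ p ^ a := dvd_sub_pow_of_dvd_sub hpk a
    have h4 : (g : G) ^ (k ^ p ^ a - 1) = 1 := by
      rw [← orderOf_dvd_iff_zpow_eq_one, hgo]
      rw [one_pow] at h3
      exact (by exact_mod_cast (pow_dvd_pow (p : ℤ) a.le_succ).trans h3)
    have h5 := hconj (p ^ a)
    rw [sub_eq_iff_eq_add.1 (rfl : k ^ p ^ a - 1 = k ^ p ^ a - 1), zpow_add, h4, one_mul,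
      zpow_one] at h5
    exact mul_inv_eq_iff_eq_mul.1 h5
  obtain ⟨m, hm⟩ := exists_pow_eq_self_of_coprime (Nat.Coprime.pow_left a hh.symm)
  obtain ⟨i, rfl⟩ := hgen u hu
  rw [← hm]
  exact (hfix.pow_left m).zpow_right i

theorem orderOf_mul_le_of_not_commute {G : Type*} [Group G] [Finite G] {p a : ℕ} (hp : p.Prime)
    (P : Subgroup G) [P.Normal] [IsCyclic P] (hP : Nat.card P = p ^ a) {h : G}
    (hh : (orderOf h).Coprime p) (hn : h ∉ Subgroup.centralizer (P : Set G))
    {u : G} (hu : u ∈ P) : orderOf (u * h) ≤ orderOf h := by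
  refine Nat.le_of_dvd (orderOf_pos h) (orderOf_dvd_of_pow_eq_one ?_)
  have hw : (u * h) ^ orderOf h ∈ P := by
    rw [← QuotientGroup.eq_one_iff, QuotientGroup.mk_pow, QuotientGroup.mk_mul,
      (QuotientGroup.eq_one_iff u).2 hu, one_mul, ← QuotientGroup.mk_pow, pow_orderOf_eq_one,
      QuotientGroup.mk_one]
  have hcomm : ∀ x ∈ P, ∀ y ∈ P, Commute x y := fun x hx y hy =>
    congrArg Subtype.val (IsCyclic.commGroup.mul_comm (⟨x, hx⟩ : P) ⟨y, hy⟩)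
  by_contra hne
  have hc : Commute h ((u * h) ^ orderOf h) := by
    have h1 : Commute (u⁻¹ * (u * h)) ((u * h) ^ orderOf h) :=
      (hcomm _ (P.inv_mem hu) _ hw).mul_left ((Commute.refl _).pow_right _)
    rwa [inv_mul_cancel_left] at h1
  exact hn <| Subgroup.mem_centralizer_iff.2 fun v hv =>
    (commute_of_commute_ne_one hp P hP hh hw hne hc hv).eq.symm

theorem psi_subgroup_eq_sum_filter {G : Type*} [Group G] [Fintype G] (H : Subgroup G) [Fintype H]
    [DecidablePred (· ∈ H)] : psi H = ∑ x : G with x ∈ H, orderOf x := by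
  rw [Finset.sum_subtype (p := (· ∈ H)) (F := inferInstance) _ (by simp)]
  simp [psi]

theorem psi_subgroup_le {G : Type*} [Group G] [Fintype G] (H : Subgroup G) [Fintype H] :
    psi H ≤ psi G := by
  classical
  rw [psi_subgroup_eq_sum_filter]
  exact Finset.sum_le_sum_of_subset (Finset.filter_subset _ _)

theorem psi_le_of_isComplement' {G : Type*} [Group G] [Fintype G] {p a : ℕ} (hp : p.Prime)
    (P H : Subgroup G) [P.Normal] [IsCyclic P] [Fintype P] [Fintype H] (hP : Nat.card P = p ^ a)
    (hH : (Nat.card H).Coprime p) (hPH : P.IsComplement' H)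
    {Z : Subgroup H} [Fintype Z] (hZ : Z = (Subgroup.centralizer (P : Set G)).subgroupOf H) :
    (psi G : ℤ) ≤ psi P * psi Z + Nat.card P * (psi H - psi Z) := by
  classical
  have h1 : psi G = ∑ h : H, ∑ u : P, orderOf ((u : G) * h) := by
    rw [Finset.sum_comm, ← Fintype.sum_prod_type']
    exact (hPH.sum_comp orderOf).symm
  have h2 : ∀ h : H, ∑ u : P, orderOf ((u : G) * h) ≤
      if h ∈ Z then psi P * orderOf h else Nat.card P * orderOf h := by
    intro h
    split_ifs with hz
    · rw [psi, Finset.sum_mul]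
      refine Finset.sum_le_sum fun u _ => ?_
      rw [hZ, Subgroup.mem_subgroupOf] at hz
      have hc : Commute (u : G) h := Subgroup.mem_centralizer_iff.1 hz u u.2
      refine Nat.le_of_dvd (Nat.mul_pos (orderOf_pos u) (orderOf_pos h)) ?_
      simpa using hc.orderOf_mul_dvd_mul_orderOf
    · rw [Nat.card_eq_fintype_card, ← Finset.card_univ, ← smul_eq_mul, ← Finset.sum_const]
      refine Finset.sum_le_sum fun u _ => ?_
      rw [← Subgroup.orderOf_coe h]
      refine orderOf_mul_le_of_not_commute hp P hP ?_
        (fun hc => hz (hZ ▸ Subgroup.mem_subgroupOf.2 hc)) u.2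
      rw [Subgroup.orderOf_coe]
      exact Nat.Coprime.of_dvd_left (orderOf_dvd_natCard h) hH
  have h3 := psi_subgroup_eq_sum_filter Z
  have h4 : psi H = psi Z + ∑ h : H with h ∉ Z, orderOf h := by
    rw [h3, psi, Finset.sum_filter_add_sum_filter_not]
  have h5 : psi G ≤ psi P * psi Z + Nat.card P * ∑ h : H with h ∉ Z, orderOf h := by
    rw [h1, h3, Finset.mul_sum, Finset.mul_sum, ← Finset.sum_ite]
    exact Finset.sum_le_sum fun h _ => h2 h
  have h6 : (psi H : ℤ) - psi Z = ((∑ h : H with h ∉ Z, orderOf h : ℕ) : ℤ) := by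
    rw [h4]; push_cast; ring
  rw [h6]
  exact_mod_cast h5

/-- A finite group with a cyclic subgroup of index less than a prime `p` has a normal cyclic
Sylow `p`-subgroup. -/
theorem exists_normal_isCyclic_sylow {G : Type*} [Group G] [Finite G] {p : ℕ} [Fact p.Prime]
    {x : G} (hx : (Subgroup.zpowers x).index < p) :
    ∃ P : Sylow p G, (P : Subgroup G).Normal ∧ IsCyclic P := by
  have hp : p.Prime := Fact.out
  have hi0 : (Subgroup.zpowers x).index ≠ 0 := Subgroup.FiniteIndex.index_ne_zero
  have hnd : ¬ p ∣ (Subgroup.zpowers x).index := fun h =>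
    absurd (Nat.le_of_dvd (Nat.pos_of_ne_zero hi0) h) (not_le.2 hx)
  have hd : p ^ (Nat.card G).factorization p ∣ orderOf x := by
    have h1 : p ^ (Nat.card G).factorization p ∣ orderOf x * (Subgroup.zpowers x).index := by
      rw [← Nat.card_zpowers, Subgroup.card_mul_index]
      exact Nat.ordProj_dvd _ _
    exact (Nat.Coprime.pow_left _ ((Nat.Prime.coprime_iff_not_dvd hp).2 hnd)).dvd_of_dvd_mul_right
      h1
  set y := x ^ (orderOf x / p ^ (Nat.card G).factorization p)
  have hy : Nat.card (Subgroup.zpowers y) = p ^ (Nat.card G).factorization p := by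
    rw [Nat.card_zpowers]
    exact orderOf_pow_orderOf_div (orderOf_pos x).ne' hd
  let P : Sylow p G := Sylow.ofCard (Subgroup.zpowers y) hy
  have hPy : (P : Subgroup G) = Subgroup.zpowers y := rfl
  have hxN : Subgroup.zpowers x ≤ Subgroup.normalizer ((P : Subgroup G) : Set G) := by
    refine le_trans ?_ (Subgroup.centralizer_le_normalizer _)
    rw [Subgroup.zpowers_le, Subgroup.mem_centralizer_iff]
    rintro z hz
    obtain ⟨k, rfl⟩ : z ∈ Subgroup.zpowers y := hz
    exact (((Commute.refl x).pow_left _).zpow_left k).eq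
  have h1 := card_sylow_modEq_one p G
  rw [P.card_eq_index_normalizer] at h1
  have h2 : (Subgroup.normalizer ((P : Subgroup G) : Set G)).index < p :=
    (Nat.le_of_dvd (Nat.pos_of_ne_zero hi0) (Subgroup.index_dvd_of_le hxN)).trans_lt hx
  have h3 := Nat.ModEq.eq_of_lt_of_lt h1 h2 hp.one_lt
  refine ⟨P, Subgroup.normalizer_eq_top_iff.1 (Subgroup.index_eq_one.1 h3), ?_⟩
  rw [hPy]
  infer_instance

theorem three_mul_psi_subgroup_le {H : Type*} [Group H] [Fintype H] [IsCyclic H]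
    (hodd : Odd (Nat.card H)) (Z : Subgroup H) [Fintype Z] (hZ : Z ≠ ⊤) :
    3 * psi Z ≤ psi H := by
  rw [psi_eq_psiC, psi_eq_psiC, ← Z.index_mul_card]
  have h0 : Z.index ≠ 0 := Subgroup.FiniteIndex.index_ne_zero
  have h1 : Z.index ≠ 1 := fun h => hZ (Subgroup.index_eq_one.1 h)
  have h2 : Odd Z.index := by
    rw [← Z.index_mul_card] at hodd
    exact (Nat.odd_mul.1 hodd).1
  have h3 : 3 ≤ Z.index := by
    obtain ⟨k, hk⟩ := h2
    omega
  exact (Nat.mul_le_mul_right _ h3).trans (mul_psiC_le_psiC_mul h0 Nat.card_pos.ne')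

theorem isCyclic_of_isComplement'_of_le_centralizer {G : Type*} [Group G] [Finite G]
    {P H : Subgroup G} [IsCyclic P] [IsCyclic H] (hPH : P.IsComplement' H)
    (hco : (Nat.card P).Coprime (Nat.card H)) (hc : H ≤ Subgroup.centralizer (P : Set G)) :
    IsCyclic G := by
  obtain ⟨g, hg⟩ := IsCyclic.exists_generator (α := P)
  obtain ⟨h, hh⟩ := IsCyclic.exists_generator (α := H)
  have hgo := orderOf_eq_card_of_forall_mem_zpowers hg
  have hho := orderOf_eq_card_of_forall_mem_zpowers hh
  have hgh : Commute (g : G) h := Subgroup.mem_centralizer_iff.1 (hc h.2) g g.2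
  refine isCyclic_of_orderOf_eq_card ((g : G) * h) ?_
  rw [hgh.orderOf_mul_eq_mul_orderOf_of_coprime, Subgroup.orderOf_coe, Subgroup.orderOf_coe,
    hgo, hho, hPH.card_mul_card]
  rwa [Subgroup.orderOf_coe, Subgroup.orderOf_coe, hgo, hho]

theorem exists_prime_dvd_forall_le {n : ℕ} (hn : n ≠ 0) (hn1 : n ≠ 1) :
    ∃ p, p.Prime ∧ p ∣ n ∧ ∀ q, q.Prime → q ∣ n → q ≤ p := by
  have hne : n.primeFactors.Nonempty := Nat.nonempty_primeFactors.2 (by omega)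
  have hm := Nat.mem_primeFactors.1 (n.primeFactors.max'_mem hne)
  exact ⟨_, hm.1, hm.2.1, fun q hq hqn =>
    n.primeFactors.le_max' q (Nat.mem_primeFactors.2 ⟨hq, hqn, hn⟩)⟩

theorem exists_index_zpowers_lt {G : Type*} [Group G] [Fintype G] {p : ℕ} (hp : 3 ≤ p)
    (h : 3 * Nat.card G ^ 2 ≤ (p + 1) * (2 * psi G)) :
    ∃ x : G, (Subgroup.zpowers x).index < p := by
  obtain ⟨x, -, hx⟩ := Finset.exists_max_image (Finset.univ : Finset G) orderOf ⟨1, by simp⟩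
  refine ⟨x, ?_⟩
  have h1 : psi G ≤ Nat.card G * orderOf x := by
    rw [psi, Nat.card_eq_fintype_card, ← Finset.card_univ]
    exact Finset.sum_le_card_nsmul _ _ _ hx
  have h2 : orderOf x * (Subgroup.zpowers x).index = Nat.card G := by
    rw [← Nat.card_zpowers, Subgroup.card_mul_index]
  have hpos : 0 < Nat.card G := Nat.card_pos
  have h3 : Nat.card G * (3 * Nat.card G) ≤ Nat.card G * ((p + 1) * (2 * orderOf x)) := by
    calc _ = 3 * Nat.card G ^ 2 := by ring
      _ ≤ _ := h
      _ ≤ (p + 1) * (2 * (Nat.card G * orderOf x)) := by gcongr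
      _ = _ := by ring
  have h4 := Nat.le_of_mul_le_mul_left h3 hpos
  rw [← h2] at h4
  have h5 : orderOf x * (3 * (Subgroup.zpowers x).index) ≤ orderOf x * (2 * (p + 1)) := by
    linarith
  have h6 := Nat.le_of_mul_le_mul_left h5 (orderOf_pos x)
  omega

theorem sum_orders_noncyclic_odd {G : Type*} [Group G] [Fintype G] (n : ℕ)
    (hn : Fintype.card G = n) (hodd : Odd n) (hG : ¬ IsCyclic G) :
    2 * psi G < psiC n := by
  classical
  induction n using Nat.strong_induction_on generalizing G with
  | _ n ih =>
  by_contra! hlt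
  have hcard : Nat.card G = n := by rw [Nat.card_eq_fintype_card, hn]
  have hn1 : n ≠ 1 := by
    rintro rfl
    have : Subsingleton G := Fintype.card_le_one_iff_subsingleton.1 hn.le
    exact hG inferInstance
  obtain ⟨p, hp, hpn, hmax⟩ := exists_prime_dvd_forall_le hodd.pos.ne' hn1
  have : Fact p.Prime := ⟨hp⟩
  have hp3 : 3 ≤ p := by
    have h2 : p ≠ 2 := by rintro rfl; exact hodd.not_two_dvd_nat hpn
    have := hp.two_le
    omega
  obtain ⟨x, hx⟩ := exists_index_zpowers_lt (G := G) hp3 <| by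
    rw [hcard]
    exact (three_mul_sq_le_psiC hp.two_le n hodd hmax).trans (Nat.mul_le_mul_left _ hlt)
  obtain ⟨P, hPn, hPc⟩ := exists_normal_isCyclic_sylow hx
  have hPcard : Nat.card P = p ^ n.factorization p := by rw [P.card_eq_multiplicity, hcard]
  have hP1 : p ≤ Nat.card P :=
    Nat.le_of_dvd Nat.card_pos (P.dvd_card_of_dvd_card (hcard ▸ hpn))
  obtain ⟨H, hPH⟩ := Subgroup.exists_right_complement'_of_coprime P.card_coprime_index
  have hmul : Nat.card P * Nat.card H = n := by rw [← hcard]; exact hPH.card_mul_card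
  have hco : (Nat.card P).Coprime (Nat.card H) := by
    have := P.card_coprime_index
    rwa [hPH.symm.index_eq_card] at this
  have hHp : (Nat.card H).Coprime p :=
    (Nat.Coprime.of_dvd_left (P.dvd_card_of_dvd_card (hcard ▸ hpn)) hco).symm
  have hHodd : Odd (Nat.card H) := (Nat.odd_mul.1 (hmul ▸ hodd)).2
  set Z := (Subgroup.centralizer ((P : Subgroup G) : Set G)).subgroupOf H with hZ
  have hle := psi_le_of_isComplement' hp P H hPcard hHp hPH hZ
  have hpsiC : psiC n = psi P * psiC (Nat.card H) := by
    rw [← hmul, psiC_mul Nat.card_pos.ne' Nat.card_pos.ne' hco, psi_eq_psiC]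
  have hPlt : 5 ≤ p → 4 * Nat.card P < psi P := by
    intro hp5
    have h1 := add_one_mul_psiC_prime_pow hp (n.factorization p)
    rw [← hPcard] at h1
    rw [psi_eq_psiC]
    nlinarith
  have hPle : Nat.card P ≤ psi P := by
    rw [Nat.card_eq_fintype_card, ← Finset.card_univ, Finset.card_eq_sum_ones]
    exact Finset.sum_le_sum fun u _ => orderOf_pos u
  by_cases hH : IsCyclic H
  · have hZt : Z ≠ ⊤ := fun h => hG <|
      isCyclic_of_isComplement'_of_le_centralizer hPH hco (Subgroup.subgroupOf_eq_top.1 h)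
    have h3 := three_mul_psi_subgroup_le hHodd Z hZt
    have hp5 : 5 ≤ p := by
      have hH1 : Nat.card H ≠ 1 := fun h => hZt <| by
        have := (Nat.card_eq_one_iff_unique.1 h).1
        exact Subsingleton.elim _ _
      obtain ⟨q, hq, hqH⟩ := Nat.exists_prime_and_dvd hH1
      have hq2 : q ≠ 2 := by rintro rfl; exact hHodd.not_two_dvd_nat hqH
      have hqp : q ≠ p := by
        rintro rfl
        exact (Nat.Prime.coprime_iff_not_dvd hq).1 hHp.symm hqH
      have := hmax q hq (hmul ▸ hqH.mul_left _)
      have := hq.two_le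
      have : p ≠ 4 := by rintro rfl; revert hp; decide
      omega
    rw [hpsiC, ← psi_eq_psiC] at hlt
    have hZpos : 0 < psi Z := Finset.sum_pos (fun z _ => orderOf_pos z) ⟨1, by simp⟩
    have h4 := hPlt hp5
    zify at *
    nlinarith
  · have hlt' : Nat.card H < n := by
      rw [← hmul]
      have : 0 < Nat.card H := Nat.card_pos
      nlinarith
    have h1 := ih _ hlt' (G := H) Nat.card_eq_fintype_card.symm hHodd hH
    have hZle := psi_subgroup_le Z
    have hPpos : 0 < psi P := by omega
    rw [hpsiC] at hlt
    zify at *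
    nlinarith
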